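/- Let U be a consistent, effectively ef-essentially incomplete c.e. theory. Then there is a c.e. set 𝒳 of sentences such that U is effectively ef-essentially 𝒳-incomplete and every φ ∈ 𝒳 is consistent with U (in other words, U_p ∪ 𝒳 is mono-consistent). -/

import Mathlib

open FirstOrder FirstOrder.Language

namespace PourEl

/-! ## Recursion-theoretic notions -/

/-- The `i`-th computably enumerable subset of `ℕ` (the domain of the `i`-th
partial computable function). -/
def WSet (i : ℕ) : Set ℕ :=
  {n | ((Denumerable.ofNat Nat.Partrec.Code i).eval n).Dom}

/-- A set of natural numbers is computably enumerable. -/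
def CE (A : Set ℕ) : Prop := ∃ i, A = WSet i

/-- A set of natural numbers is computable. -/
def Comp (A : Set ℕ) : Prop := ComputablePred (· ∈ A)

/-- Disjoint sets `X`, `Y` are computably separable iff some computable set
contains `X` and is disjoint from `Y`. -/
def CompSeparable (X Y : Set ℕ) : Prop :=
  ∃ Z : Set ℕ, Comp Z ∧ X ⊆ Z ∧ Y ∩ Z = ∅

/-- Computable inseparability. -/
def CompInseparable (X Y : Set ℕ) : Prop := ¬ CompSeparable X Y

/-- `Z` and `W` weakly biseparate `X` and `Y`. -/
def WeaklyBiseparate {α : Type*} (Z W X Y : Set α) : Prop :=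
  X ⊆ Z ∧ Y ⊆ W ∧ Z ∩ Y = ∅ ∧ W ∩ X = ∅

/-- `Z` and `W` biseparate `X` and `Y`. -/
def Biseparate {α : Type*} (Z W X Y : Set α) : Prop :=
  WeaklyBiseparate Z W X Y ∧ Z ∩ W = ∅

/-! ## Logical notions -/

variable {L : FirstOrder.Language}

/-- Provability: `φ` is a first-order consequence of `U` (by Gödel completeness,
semantic consequence). -/
def Prv (U : L.Theory) (φ : L.Sentence) : Prop := U ⊨ᵇ φ

/-- `U_p`: the set of theorems of `U`. -/
def Thms (U : L.Theory) : Set L.Sentence := {φ | Prv U φ}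

/-- `U_r`: the set of refutable sentences of `U`. -/
def Refut (U : L.Theory) : Set L.Sentence := {φ | Prv U ∼φ}

/-- Consistency: `U ⊬ ⊥`. -/
def Consistent (U : L.Theory) : Prop := ¬ Prv U ⊥

/-- `φ` is independent of `U`: `U` proves neither `φ` nor `¬φ`. -/
def Independent (U : L.Theory) (φ : L.Sentence) : Prop := ¬ Prv U φ ∧ ¬ Prv U ∼φ

/-- `U` is incomplete: some sentence is independent of it. -/
def Incomplete (U : L.Theory) : Prop := ∃ φ, Independent U φ

/-- Mono-consequence: `U ⊢_m φ` iff `ψ ⊢ φ` for some `ψ ∈ U`. -/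
def MPrv (U : L.Theory) (φ : L.Sentence) : Prop := ∃ ψ ∈ U, Prv {ψ} φ

/-- `U_m`: the set of mono-theorems of `U`. -/
def MThms (U : L.Theory) : Set L.Sentence := {φ | MPrv U φ}

/-- `U_n`: the set of mono-refutable sentences of `U`. -/
def MRefut (U : L.Theory) : Set L.Sentence := {φ | MPrv U ∼φ}

/-- Mono-consistency: every member is consistent by itself. -/
def MonoConsistent (U : L.Theory) : Prop := ∀ ψ ∈ U, Consistent ({ψ} : L.Theory)

/-- `Û`: the set of all non-empty finite conjunctions of elements of `U`. -/
def hat (U : L.Theory) : L.Theory :=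
  {φ | ∃ (ψ : L.Sentence) (l : List L.Sentence),
    ψ ∈ U ∧ (∀ χ ∈ l, χ ∈ U) ∧ φ = l.foldl (· ⊓ ·) ψ}

/-- `U ⋓ V`. -/
def Cup (U V : L.Theory) : L.Theory :=
  {χ | ∃ φ ∈ U, ∃ ψ ∈ V, χ = φ ⊓ ψ}

/-- `U ⋐ V`: for every `φ ∈ U` and `ψ ∈ V` there is `ρ ∈ V` with `ρ ⊢ φ ∧ ψ`. -/
def Ssub (U V : L.Theory) : Prop :=
  ∀ φ ∈ U, ∀ ψ ∈ V, ∃ ρ ∈ V, Prv {ρ} (φ ⊓ ψ)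

/-! ## Gödel numbering -/

/-- A Gödel numbering of the sentences of a (countable) signature: a bijective
coding of sentences by natural numbers that is effective for the basic syntactic
operations, and for which the theorems of a c.e. theory can be effectively
enumerated from an index of the theory. -/
structure Numbering (L : FirstOrder.Language) where
  equiv : L.Sentence ≃ ℕ
  neg_comp : Computable fun n => equiv ∼(equiv.symm n)
  inf_comp : Computable₂ fun m n => equiv (equiv.symm m ⊓ equiv.symm n)
  imp_comp : Computable₂ fun m n => equiv (equiv.symm m ⟹ equiv.symm n)
  iff_comp : Computable₂ fun m n => equiv (equiv.symm m ⇔ equiv.symm n)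
  thmIdx : ℕ → ℕ
  thmIdx_comp : Computable thmIdx
  thmIdx_spec : ∀ i, WSet (thmIdx i) = equiv '' Thms (equiv.symm '' WSet i)

namespace Numbering

variable (g : Numbering L)

/-- The code of a sentence. -/
def code (φ : L.Sentence) : ℕ := g.equiv φ

/-- The set of codes of a set of sentences. -/
def codes (S : Set L.Sentence) : Set ℕ := g.equiv '' S

/-- The theory axiomatised by the `i`-th c.e. set (identified with a set of
sentences via the numbering). -/
def thy (i : ℕ) : L.Theory := g.equiv.symm '' WSet i

/-- The theory `U` is computably enumerable (with respect to the numbering). -/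
def CEThy (U : L.Theory) : Prop := CE (g.codes U)

end Numbering


/-- `U` is effectively ef-essentially `F`-incomplete: a total computable function
on (codes of) sentences produces, for each `φ` consistent with `U`, a sentence
independent of `U ∪ {φ}` lying in `F (U ∪ {φ})`. -/
def EffEfEssIncomplete (g : Numbering L) (U : L.Theory)
    (F : Set L.Sentence → Set L.Sentence) : Prop :=
  ∃ Φ : ℕ → ℕ, Computable Φ ∧ ∀ φ : L.Sentence,
    Consistent (U ∪ {φ}) →
    Independent (U ∪ {φ}) (g.equiv.symm (Φ (g.code φ))) ∧
    g.equiv.symm (Φ (g.code φ)) ∈ F (U ∪ {φ})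

/-!
Take `X` to be the set of implications `φ ⟹ Φ φ`, where `Φ` witnesses effective ef-essential
incompleteness. Over `U ∪ {φ}` the sentences `φ ⟹ Φ φ` and `Φ φ` are equivalent, so one is
independent exactly when the other is. Moreover `φ ⟹ Φ φ` is always consistent with `U`: a
refutation of it in `U` would yield both `φ` and `∼(Φ φ)`, so that `φ` would be consistent with `U`
while `U ∪ {φ}` refutes `Φ φ`.
-/

section Provability

variable {S T : L.Theory} {φ χ : L.Sentence}

theorem Prv.of_mem (h : φ ∈ T) : Prv T φ :=
  Theory.models_sentence_of_mem h

theorem Prv.mono (h : Prv S φ) (hST : S ⊆ T) : Prv T φ :=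
  Theory.models_of_models_theory (fun _ hψ => Prv.of_mem (hST hψ)) h

theorem Prv.mp (himp : Prv T (φ ⟹ χ)) (h : Prv T φ) : Prv T χ :=
  Theory.models_sentence_iff.2 fun M => himp.realize_sentence M (h.realize_sentence M)

theorem Prv.imp_of_right (h : Prv T χ) : Prv T (φ ⟹ χ) :=
  Theory.models_sentence_iff.2 fun M _ => h.realize_sentence M

theorem prv_union_singleton_iff : Prv (T ∪ {φ}) χ ↔ Prv T (φ ⟹ χ) := by
  constructor
  · refine fun h => Theory.models_sentence_iff.2 fun M hφ => ?_
    have : M ⊨ T ∪ {φ} := M.is_model.union (Theory.model_singleton_iff.2 hφ)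
    exact h.realize_sentence M
  · exact fun h => (h.mono Set.subset_union_left).mp (Prv.of_mem (Or.inr rfl))

theorem prv_not_imp_iff : Prv T ∼(φ ⟹ χ) ↔ Prv T φ ∧ Prv T ∼χ := by
  simp only [Prv, Theory.models_sentence_iff, Sentence.realize_not, Sentence.realize_imp,
    Classical.not_imp, forall_and]

theorem Consistent.mono (h : Consistent T) (hST : S ⊆ T) : Consistent S :=
  fun hS => h (hS.mono hST)

-- Mathlib defines `∼φ` as `φ ⟹ ⊥`, which makes modus ponens and the deduction theorem apply to it.
theorem Consistent.not_prv_not (hT : Consistent T) (h : Prv T φ) : ¬ Prv T ∼φ :=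
  fun hφ => hT (Prv.mp hφ h)

theorem consistent_union_singleton_iff : Consistent (T ∪ {φ}) ↔ ¬ Prv T ∼φ :=
  not_congr prv_union_singleton_iff

theorem Consistent.union_singleton_imp (hT : Consistent T)
    (h : Consistent (T ∪ {φ}) → ¬ Prv (T ∪ {φ}) ∼χ) : Consistent (T ∪ {φ ⟹ χ}) := by
  rw [consistent_union_singleton_iff, prv_not_imp_iff]
  rintro ⟨hφ, hχ⟩
  have hcon : Consistent (T ∪ {φ}) := consistent_union_singleton_iff.2 (hT.not_prv_not hφ)
  exact h hcon (hχ.mono Set.subset_union_left)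

theorem independent_imp_iff (h : Prv T φ) : Independent T (φ ⟹ χ) ↔ Independent T χ := by
  have prv_iff : Prv T (φ ⟹ χ) ↔ Prv T χ := ⟨fun himp => himp.mp h, Prv.imp_of_right⟩
  simp only [Independent, prv_iff, prv_not_imp_iff, h, true_and]

theorem monoConsistent_thms_union {X : Set L.Sentence} (hT : Consistent T)
    (hX : ∀ φ ∈ X, Consistent (T ∪ {φ})) : MonoConsistent (Thms T ∪ X) := by
  suffices ∀ φ ∈ Thms T ∪ X, Consistent (T ∪ {φ}) from
    fun φ hφ => (this φ hφ).mono Set.subset_union_right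
  rintro φ (hφ | hφ)
  · exact consistent_union_singleton_iff.2 (hT.not_prv_not hφ)
  · exact hX φ hφ

end Provability

section Enumerability

variable {α β : Type*} [Primcodable α] [Primcodable β]

theorem rePred_exists_nat {p : α → ℕ → Prop} (hp : ComputablePred fun x : α × ℕ => p x.1 x.2) :
    REPred fun a => ∃ n, p a n := by
  classical
  have hsearch : Partrec fun a => Nat.rfind fun n => Part.some (decide (p a n)) :=
    Partrec.rfind hp.decide.partrec
  refine hsearch.dom_re.of_eq fun a => Nat.rfind_dom.trans ?_
  simp only [Part.mem_some_iff, Part.some_dom, implies_true, and_true, eq_comm (a := true),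
    decide_eq_true_eq]

theorem rePred_mem_range {f : α → β} (hf : Computable f) : REPred (· ∈ Set.range f) := by
  classical
  let p (b : β) (n : ℕ) : Prop := (Encodable.decode n : Option α).map f = some b
  have hp : ComputablePred fun x : β × ℕ => p x.1 x.2 :=
    ⟨inferInstance, Primrec.eq.decide.to_comp.comp
      (Computable.option_map (Computable.decode.comp Computable.snd) (hf.comp Computable.snd).to₂)
      (Computable.option_some.comp Computable.fst)⟩
  refine (rePred_exists_nat hp).of_eq fun b => ⟨?_, ?_⟩
  · rintro ⟨n, hn⟩
    obtain ⟨a, -, rfl⟩ := Option.map_eq_some_iff.1 hn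
    exact ⟨a, rfl⟩
  · rintro ⟨a, rfl⟩
    exact ⟨Encodable.encode a, by simp only [p, Encodable.encodek, Option.map_some]⟩

theorem ce_of_rePred {A : Set ℕ} (hA : REPred (· ∈ A)) : CE A := by
  have hzero : Partrec fun n => (Part.assert (n ∈ A) fun _ => Part.some ()).map fun _ => 0 :=
    hA.map (Computable.const 0).to₂
  obtain ⟨c, hc⟩ := Nat.Partrec.Code.exists_code.1 (Partrec.nat_iff.1 hzero)
  refine ⟨Encodable.encode c, Set.ext fun n => ?_⟩
  simp only [WSet, Denumerable.ofNat_encode, hc, Set.mem_ofPred_eq, Part.map_Dom]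
  simp [Part.assert]

end Enumerability

namespace Numbering

variable (g : Numbering L)

/-- The sentence `φ ⟹ Φ φ`, where `φ` is given by its code `n` and `Φ` is a map on codes. -/
def impWitness (Φ : ℕ → ℕ) (n : ℕ) : L.Sentence :=
  g.equiv.symm n ⟹ g.equiv.symm (Φ n)

variable {g} {Φ : ℕ → ℕ}

theorem computable_code_impWitness (hΦ : Computable Φ) :
    Computable fun n => g.code (g.impWitness Φ n) :=
  g.imp_comp.comp Computable.id hΦ

theorem ce_codes_range {α : Type*} [Primcodable α] {f : α → L.Sentence}
    (hf : Computable fun a => g.code (f a)) : CE (g.codes (Set.range f)) := by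
  rw [codes, ← Set.range_comp]
  exact ce_of_rePred (rePred_mem_range hf)

end Numbering

theorem statement14_general (g : Numbering L) (U : L.Theory) (hcon : Consistent U)
    (h : EffEfEssIncomplete g U (fun _ => (Set.univ : Set L.Sentence))) :
    ∃ X : Set L.Sentence, CE (g.codes X) ∧
      EffEfEssIncomplete g U (fun _ => X) ∧
      (∀ φ ∈ X, Consistent (U ∪ {φ})) ∧
      MonoConsistent (Thms U ∪ X) := by
  obtain ⟨Φ, hΦ, hΦ_spec⟩ := h
  have hΦ_indep (n : ℕ) (hn : Consistent (U ∪ {g.equiv.symm n})) :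
      Independent (U ∪ {g.equiv.symm n}) (g.equiv.symm (Φ n)) := by
    simpa only [Numbering.code, Equiv.apply_symm_apply] using (hΦ_spec _ hn).1
  have hrange_con : ∀ φ ∈ Set.range (g.impWitness Φ), Consistent (U ∪ {φ}) := by
    rintro _ ⟨n, rfl⟩
    exact hcon.union_singleton_imp fun hn => (hΦ_indep n hn).2
  have hcomp := Numbering.computable_code_impWitness (g := g) hΦ
  refine ⟨Set.range (g.impWitness Φ), Numbering.ce_codes_range hcomp, ⟨_, hcomp, fun φ hφ => ?_⟩,
    hrange_con, monoConsistent_thms_union hcon hrange_con⟩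
  obtain ⟨n, rfl⟩ := g.equiv.symm.surjective φ
  simp only [Numbering.code, Equiv.apply_symm_apply, Equiv.symm_apply_apply]
  exact ⟨(independent_imp_iff (Prv.of_mem (Or.inr rfl))).2 (hΦ_indep n hφ), Set.mem_range_self n⟩

/-- If `U` is a consistent, effectively ef-essentially
incomplete c.e. theory, then there is a c.e. set `X` of sentences such that `U`
is effectively ef-essentially `X`-incomplete and every `φ ∈ X` is consistent
with `U` (in other words, `U_p ∪ X` is mono-consistent). -/
theorem statement14 {L : FirstOrder.Language} (g : Numbering L) (U : L.Theory)
    (hU : g.CEThy U) (hcon : Consistent U)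
    (h : EffEfEssIncomplete g U (fun _ => (Set.univ : Set L.Sentence))) :
    ∃ X : Set L.Sentence, CE (g.codes X) ∧
      EffEfEssIncomplete g U (fun _ => X) ∧
      (∀ φ ∈ X, Consistent (U ∪ {φ})) ∧
      MonoConsistent (Thms U ∪ X) := by
  exact statement14_general g U hcon h

end PourEl
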